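/- The probability that a uniformly random multiset of d elements drawn from a d-element set contains some element with multiplicity at least α is at most d · (1/2)^(α-1) · d/(2d-1); in particular, for α = ⌈2 log₂ d + 1⌉ this probability is at most 1/d. -/

import Mathlib

/-!
A multiset in which `i` occurs at least `α` times is `α` copies of `i` together with an arbitrary
multiset of size `n - α`. A union bound over `i` therefore bounds the probability by
`N * multichoose N (n - α) / multichoose N n`, where `N` is the size of the ground set. Since
`(k + 1) * multichoose N (k + 1) = (N + k) * multichoose N k`, shrinking the size from `k + 1` to
`k` multiplies `multichoose N` by `(k + 1) / (N + k)`. For `n ≤ N`, the first of the `α` shrinkings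
contributes `n / (N + n - 1)`, and each later one, where `k + 2 ≤ N`, contributes at most `1 / 2`.
-/

section Counting

variable {ι : Type*} [DecidableEq ι] {n k : ℕ}

lemma le_count_iff_exists_append_replicate {i : ι} {m : Sym ι (n + k)} :
    k ≤ (m : Multiset ι).count i ↔ ∃ s : Sym ι n, s.append (Sym.replicate k i) = m := by
  constructor
  · intro h
    have hle : Multiset.replicate k i ≤ m := Multiset.le_count_iff_replicate_le.1 h
    refine ⟨⟨m - Multiset.replicate k i, ?_⟩, Sym.coe_injective ?_⟩
    · rw [Multiset.card_sub hle, Sym.card_coe, Multiset.card_replicate, Nat.add_sub_cancel]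
    · exact tsub_add_cancel_of_le hle
  · rintro ⟨s, rfl⟩
    simp [Sym.coe_append, Sym.coe_replicate]

lemma card_sym_exists_le_count_le [Finite ι] :
    Nat.card {m : Sym ι (n + k) // ∃ i, k ≤ (m : Multiset ι).count i} ≤
      Nat.card ι * (Nat.card ι).multichoose n := by
  let glue : ι × Sym ι n → Sym ι (n + k) := fun p ↦ p.2.append (Sym.replicate k p.1)
  have hglue (m : Sym ι (n + k)) :
      (∃ i, k ≤ (m : Multiset ι).count i) ↔ m ∈ Set.range glue := by
    simp only [le_count_iff_exists_append_replicate, Set.mem_range, Prod.exists, glue]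
  calc Nat.card {m : Sym ι (n + k) // ∃ i, k ≤ (m : Multiset ι).count i}
    _ = Nat.card (Set.range glue) := Nat.card_congr (Equiv.subtypeEquivRight hglue)
    _ ≤ Nat.card (ι × Sym ι n) := Finite.card_range_le glue
    _ = Nat.card ι * (Nat.card ι).multichoose n := by
      rw [Nat.card_prod, Sym.natCard_sym_eq_multichoose]

lemma card_sym_exists_le_count_eq_zero (h : n < k) :
    Nat.card {m : Sym ι n // ∃ i, k ≤ (m : Multiset ι).count i} = 0 := by
  have : IsEmpty {m : Sym ι n // ∃ i, k ≤ (m : Multiset ι).count i} := by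
    refine ⟨fun ⟨m, i, hi⟩ ↦ (hi.trans (Multiset.count_le_card i m)).not_gt ?_⟩
    rwa [Sym.card_coe]
  exact Nat.card_of_isEmpty

lemma card_sym_fin_self (d : ℕ) : Nat.card (Sym (Fin d) d) = (2 * d - 1).choose (d - 1) := by
  rw [Sym.natCard_sym_eq_multichoose, Nat.card_fin, Nat.multichoose_eq, ← two_mul]
  cases d with
  | zero => rfl
  | succ e => exact Nat.choose_symm_half e

end Counting

section Multichoose

variable {N n k : ℕ}

lemma succ_mul_multichoose_succ (N k : ℕ) :
    (k + 1) * N.multichoose (k + 1) = (N + k) * N.multichoose k := by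
  cases N with
  | zero => cases k <;> simp
  | succ M =>
    have h := Nat.add_one_mul_choose_eq (M + k) k
    rw [Nat.multichoose_eq, Nat.multichoose_eq, show M + 1 + (k + 1) - 1 = M + k + 1 by lia,
      show M + 1 + k - 1 = M + k by lia]
    linarith

lemma two_mul_multichoose_le (h : k + 2 ≤ N) :
    2 * N.multichoose k ≤ N.multichoose (k + 1) := by
  refine le_of_mul_le_mul_left ?_ k.succ_pos
  calc (k + 1) * (2 * N.multichoose k)
    _ = (2 * k + 2) * N.multichoose k := by ring
    _ ≤ (N + k) * N.multichoose k := by gcongr ?_ * _; lia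
    _ = (k + 1) * N.multichoose (k + 1) := (succ_mul_multichoose_succ N k).symm

lemma two_pow_mul_multichoose_le (h : n + k < N) :
    2 ^ k * N.multichoose n ≤ N.multichoose (n + k) := by
  induction k with
  | zero => simp
  | succ k ih =>
    calc 2 ^ (k + 1) * N.multichoose n
      _ = 2 * (2 ^ k * N.multichoose n) := by ring
      _ ≤ 2 * N.multichoose (n + k) := by gcongr; exact ih (by lia)
      _ ≤ N.multichoose (n + (k + 1)) := two_mul_multichoose_le (by lia)

lemma two_pow_mul_add_mul_multichoose_le (h : n + k < N) :
    2 ^ k * (N + (n + k)) * N.multichoose n ≤ (n + k + 1) * N.multichoose (n + k + 1) := by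
  calc 2 ^ k * (N + (n + k)) * N.multichoose n
    _ = (N + (n + k)) * (2 ^ k * N.multichoose n) := by ring
    _ ≤ (N + (n + k)) * N.multichoose (n + k) := by gcongr; exact two_pow_mul_multichoose_le h
    _ = (n + k + 1) * N.multichoose (n + k + 1) := (succ_mul_multichoose_succ N (n + k)).symm

lemma multichoose_div_multichoose_le (h : n + k < N) :
    (N.multichoose n : ℚ) / N.multichoose (n + k + 1) ≤
      (1 / 2) ^ k * ((n + k + 1) / (N + (n + k))) := by
  have hN : 0 < N := by lia
  have hpos : 0 < N.multichoose (n + k + 1) := by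
    rw [Nat.multichoose_eq]
    exact Nat.choose_pos (by lia)
  have hmul : (2 ^ k * (N + (n + k)) * N.multichoose n : ℚ) ≤
      (n + k + 1) * N.multichoose (n + k + 1) :=
    mod_cast two_pow_mul_add_mul_multichoose_le h
  rw [one_div, inv_pow, inv_mul_eq_div, div_div, div_le_div_iff₀ (by positivity) (by positivity)]
  linarith

end Multichoose

lemma rpow_le_pow_ceil_mul_logb {b x : ℝ} (hb : 1 < b) (hx : 0 < x) (y : ℝ) :
    x ^ y ≤ b ^ ⌈y * Real.logb b x⌉₊ := by
  calc x ^ y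
    _ = b ^ (y * Real.logb b x) := by
      rw [mul_comm, Real.rpow_mul (by positivity), Real.rpow_logb (by positivity) hb.ne' hx]
    _ ≤ b ^ (⌈y * Real.logb b x⌉₊ : ℝ) := Real.rpow_le_rpow_of_exponent_le hb.le (Nat.le_ceil _)
    _ = b ^ ⌈y * Real.logb b x⌉₊ := Real.rpow_natCast b _

lemma half_pow_ceil_logb_sub_one_le {N : ℕ} (hN : 1 ≤ N) :
    ((1 : ℚ) / 2) ^ (⌈2 * Real.logb 2 N + 1⌉₊ - 1) ≤ 1 / (N : ℚ) ^ 2 := by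
  have hlog : 0 ≤ Real.logb 2 N := Real.logb_nonneg one_lt_two (mod_cast hN)
  have hsq : (N : ℝ) ^ 2 ≤ 2 ^ ⌈2 * Real.logb 2 N⌉₊ := by
    simpa only [Real.rpow_ofNat] using
      rpow_le_pow_ceil_mul_logb one_lt_two (Nat.cast_pos.2 hN) 2
  rw [Nat.ceil_add_one (by positivity), Nat.add_sub_cancel, one_div_pow]
  exact one_div_le_one_div_of_le (by positivity) (mod_cast hsq)

section Probability

variable {ι : Type*} [DecidableEq ι] [Finite ι] {n : ℕ}

lemma card_sym_exists_le_count_div_le (hn : 1 ≤ n) (hnι : n ≤ Nat.card ι) {α : ℕ} (hα : 1 ≤ α) :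
    (Nat.card {m : Sym ι n // ∃ i, α ≤ (m : Multiset ι).count i} : ℚ) / Nat.card (Sym ι n) ≤
      Nat.card ι * (1 / 2) ^ (α - 1) * (n / (Nat.card ι + n - 1)) := by
  obtain hlt | hle := lt_or_ge n α
  · have hden : (1 : ℚ) ≤ Nat.card ι + n := mod_cast hn.trans (Nat.le_add_left n _)
    rw [card_sym_exists_le_count_eq_zero hlt, Nat.cast_zero, zero_div]
    exact mul_nonneg (by positivity) (div_nonneg (by positivity) (sub_nonneg.2 hden))
  · obtain ⟨k, rfl⟩ := Nat.exists_eq_add_of_le' hα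
    obtain ⟨r, rfl⟩ := Nat.exists_eq_add_of_le' hle
    set N := Nat.card ι with hN
    have hcard : (Nat.card {m : Sym ι (r + (k + 1)) //
        ∃ i, k + 1 ≤ (m : Multiset ι).count i} : ℚ) ≤ N * N.multichoose r :=
      mod_cast card_sym_exists_le_count_le
    rw [Sym.natCard_sym_eq_multichoose, ← hN, ← add_assoc, Nat.add_sub_cancel]
    calc (Nat.card {m : Sym ι (r + k + 1) // ∃ i, k + 1 ≤ (m : Multiset ι).count i} : ℚ) /
          N.multichoose (r + k + 1)
      _ ≤ N * N.multichoose r / N.multichoose (r + k + 1) := by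
          gcongr
          exact hcard
      _ = N * (N.multichoose r / N.multichoose (r + k + 1)) := mul_div_assoc ..
      _ ≤ N * ((1 / 2) ^ k * ((r + k + 1) / (N + (r + k)))) := by
          gcongr
          exact multichoose_div_multichoose_le hnι
      _ = N * (1 / 2) ^ k * ((r + k + 1 : ℕ) / (N + (r + k + 1 : ℕ) - 1)) := by
          push_cast
          ring_nf

theorem stmt7_general (hn : 1 ≤ n) (hnι : n ≤ Nat.card ι) :
    (∀ α : ℕ, 1 ≤ α →
      (Nat.card {m : Sym ι n // ∃ i, α ≤ (m : Multiset ι).count i} : ℚ) / Nat.card (Sym ι n) ≤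
        Nat.card ι * (1 / 2) ^ (α - 1) * (n / (Nat.card ι + n - 1))) ∧
    (Nat.card {m : Sym ι n //
        ∃ i, ⌈2 * Real.logb 2 (Nat.card ι) + 1⌉₊ ≤ (m : Multiset ι).count i} : ℚ) /
      Nat.card (Sym ι n) ≤ 1 / Nat.card ι := by
  refine ⟨fun α hα ↦ card_sym_exists_le_count_div_le hn hnι hα, ?_⟩
  have hN : 1 ≤ Nat.card ι := hn.trans hnι
  have hNq : (1 : ℚ) ≤ Nat.card ι := mod_cast hN
  have hnq : (1 : ℚ) ≤ n := mod_cast hn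
  have hceil : 1 ≤ ⌈2 * Real.logb 2 (Nat.card ι) + 1⌉₊ := by
    have hlog : 0 ≤ Real.logb 2 (Nat.card ι) := Real.logb_nonneg one_lt_two (mod_cast hN)
    exact Nat.one_le_ceil_iff.2 (by positivity)
  have hratio : (n : ℚ) / (Nat.card ι + n - 1) ≤ 1 := (div_le_one (by linarith)).2 (by linarith)
  refine (card_sym_exists_le_count_div_le hn hnι hceil).trans ?_
  calc (Nat.card ι : ℚ) * (1 / 2) ^ (⌈2 * Real.logb 2 (Nat.card ι) + 1⌉₊ - 1) *
        (n / (Nat.card ι + n - 1))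
    _ ≤ Nat.card ι * (1 / 2) ^ (⌈2 * Real.logb 2 (Nat.card ι) + 1⌉₊ - 1) :=
        mul_le_of_le_one_right (by positivity) hratio
    _ ≤ (Nat.card ι : ℚ) * (1 / (Nat.card ι : ℚ) ^ 2) := by
        gcongr
        exact half_pow_ceil_logb_sub_one_le hN
    _ = 1 / Nat.card ι := by field_simp

end Probability

/-- For a uniformly random multiset of d elements from a d-element set, the probability
that some element has multiplicity ≥ α is at most d·(1/2)^(α-1)·d/(2d-1); in particular
for α = ⌈2 log₂ d + 1⌉ this probability is at most 1/d. -/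
theorem stmt7 (d : ℕ) (hd : 1 ≤ d) :
    (∀ α : ℕ, 1 ≤ α →
      (Nat.card {m : Sym (Fin d) d // ∃ i : Fin d, α ≤ Multiset.count i (m : Multiset (Fin d))} : ℚ)
          / ((2 * d - 1).choose (d - 1) : ℚ)
        ≤ (d : ℚ) * (1 / 2) ^ (α - 1) * ((d : ℚ) / (2 * d - 1))) ∧
    (Nat.card {m : Sym (Fin d) d //
        ∃ i : Fin d, ⌈2 * Real.logb 2 d + 1⌉₊ ≤ Multiset.count i (m : Multiset (Fin d))} : ℚ)
        / ((2 * d - 1).choose (d - 1) : ℚ) ≤ 1 / (d : ℚ) := by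
  simpa only [Nat.card_fin, card_sym_fin_self, ← two_mul] using
    stmt7_general (ι := Fin d) hd (Nat.card_fin d).ge
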